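/- There exists an integer N such that for all integers n ≥ N and all p ∈ [1/3, 2/3], if Z follows the binomial distribution B(n, p), then both Pr[Z ≥ np + √n/10] ≥ 1/3 and Pr[Z ≤ np] ≥ 1/3. -/

import Mathlib

open scoped Classical

open MeasureTheory ProbabilityTheory Filter Topology Complex
open scoped unitInterval

/-- The law of `(Z - np) / √(np(1 - p))` for `Z ~ B(n, p)`. -/
noncomputable def standardizedBinomial (n : ℕ) (p : I) : Measure ℝ :=
  (binomial n p).map fun k : ℕ ↦ ((k : ℝ) - n * p) / √(n * (p * (1 - p)))

instance isProbabilityMeasure_standardizedBinomial (n : ℕ) (p : I) :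
    IsProbabilityMeasure (standardizedBinomial n p) :=
  Measure.isProbabilityMeasure_map .of_discrete

lemma charFun_standardizedBinomial (n : ℕ) (p : I) (t : ℝ) :
    charFun (standardizedBinomial n p) t =
      ((p : ℂ) * exp ((1 - p) * (t / √(n * (p * (1 - p))) : ℝ) * Complex.I) +
        (1 - p) * exp (-p * (t / √(n * (p * (1 - p))) : ℝ) * Complex.I)) ^ n := by
  rw [charFun_apply_real, standardizedBinomial,
    integral_map .of_discrete (by fun_prop), integral_binomial, add_pow,
    ← Nat.range_succ_eq_Iic]
  refine Finset.sum_congr rfl fun k hk ↦ ?_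
  have hkn : k ≤ n := Nat.lt_succ_iff.mp (Finset.mem_range.mp hk)
  set c : ℝ := √(n * (p * (1 - p)))
  rw [mul_pow, mul_pow, ← exp_nat_mul, ← exp_nat_mul]
  have hexp : exp (t * (((k : ℝ) - n * p) / c : ℝ) * Complex.I) =
      exp (k * ((1 - p) * (t / c : ℝ) * Complex.I)) *
        exp ((n - k : ℕ) * (-p * (t / c : ℝ) * Complex.I)) := by
    rw [← exp_add]
    congr 1
    push_cast [Nat.cast_sub hkn]
    ring
  rw [hexp, Complex.real_smul]
  push_cast
  ring

lemma norm_exp_mul_I_sub_le (x : ℝ) :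
    ‖exp (x * Complex.I) - (1 + x * Complex.I - x ^ 2 / 2)‖ ≤ |x| ^ 3 * Real.exp |x| := by
  have h := norm_exp_sub_sum_le_norm_mul_exp (x * Complex.I) 3
  have hs : ∑ m ∈ Finset.range 3, (x * Complex.I) ^ m / (m.factorial : ℂ) =
      1 + x * Complex.I - x ^ 2 / 2 := by
    simp [Finset.sum_range_succ, mul_pow]
    ring
  rw [hs] at h
  simpa using h

/-- Second-order expansion of the characteristic function of a centered Bernoulli variable. -/
lemma norm_charFun_centered_bernoulli_sub_le (p : I) (c : ℝ) :
    ‖((p : ℂ) * exp ((1 - p) * c * Complex.I) + (1 - p) * exp (-p * c * Complex.I) - 1) +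
      p * (1 - p) * c ^ 2 / 2‖ ≤ |c| ^ 3 * Real.exp |c| := by
  have hp0 : (0 : ℝ) ≤ p := p.2.1
  have hp1 : (p : ℝ) ≤ 1 := p.2.2
  have bound (y : ℝ) (hy : |y| ≤ 1) :
      ‖exp ((y * c : ℝ) * Complex.I) -
        (1 + (y * c : ℝ) * Complex.I - (y * c : ℝ) ^ 2 / 2)‖ ≤ |c| ^ 3 * Real.exp |c| := by
    refine (norm_exp_mul_I_sub_le (y * c)).trans ?_
    have : |y * c| ≤ |c| := by
      rw [abs_mul]
      exact mul_le_of_le_one_left (abs_nonneg c) hy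
    gcongr
  have h1 := bound (1 - p) (by rw [abs_le]; constructor <;> linarith)
  have h2 := bound (-p) (by rw [abs_le]; constructor <;> linarith)
  set A := exp (((1 - p) * c : ℝ) * Complex.I) -
    (1 + ((1 - p) * c : ℝ) * Complex.I - ((1 - p) * c : ℝ) ^ 2 / 2) with hA
  set B := exp ((-p * c : ℝ) * Complex.I) -
    (1 + (-p * c : ℝ) * Complex.I - (-p * c : ℝ) ^ 2 / 2) with hB
  have heq : ((p : ℂ) * exp ((1 - p) * c * Complex.I) + (1 - p) * exp (-p * c * Complex.I) - 1) +
      p * (1 - p) * c ^ 2 / 2 = ((p : ℝ) : ℂ) * A + ((1 - p : ℝ) : ℂ) * B := by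
    rw [hA, hB]
    push_cast
    ring
  rw [heq]
  refine (norm_add_le _ _).trans ?_
  rw [norm_mul, norm_mul, Complex.norm_of_nonneg hp0, Complex.norm_of_nonneg (by linarith)]
  nlinarith [mul_le_mul_of_nonneg_left h1 hp0,
    mul_le_mul_of_nonneg_left h2 (sub_nonneg.mpr hp1)]

/-- **Central limit theorem** for binomial laws whose parameter may vary with `n`. -/
lemma tendsto_standardizedBinomial {p : ℕ → I} {δ : ℝ} (hδ : 0 < δ)
    (hp : ∀ n, δ ≤ p n * (1 - p n)) :
    Tendsto (β := ProbabilityMeasure ℝ) (fun n ↦ ⟨standardizedBinomial n (p n), inferInstance⟩)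
      atTop (𝓝 ⟨gaussianReal 0 1, inferInstance⟩) := by
  refine ProbabilityMeasure.tendsto_of_tendsto_charFun fun t ↦ ?_
  simp only [ProbabilityMeasure.coe_mk, charFun_standardizedBinomial, charFun_gaussianReal]
  set c : ℕ → ℝ := fun n ↦ t / √(n * (p n * (1 - p n))) with hc
  have hvar (n : ℕ) (hn : n ≠ 0) : (n : ℝ) * (p n * (1 - p n)) * c n ^ 2 = t ^ 2 := by
    have : 0 < n * ((p n : ℝ) * (1 - p n)) :=
      mul_pos (by positivity) (hδ.trans_le (hp n))
    rw [hc, div_pow, Real.sq_sqrt this.le, mul_div_assoc', mul_div_cancel_left₀ _ this.ne']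
  have hc0 : Tendsto c atTop (𝓝 0) := by
    refine Tendsto.const_div_atTop ?_ t
    refine Real.tendsto_sqrt_atTop.comp ?_
    refine tendsto_atTop_mono (fun n ↦ mul_le_mul_of_nonneg_left (hp n) n.cast_nonneg) ?_
    exact tendsto_natCast_atTop_atTop.atTop_mul_const hδ
  have key : Tendsto (fun n : ℕ ↦ (n : ℂ) *
      ((p n : ℂ) * exp ((1 - p n) * c n * Complex.I) +
        (1 - p n) * exp (-p n * c n * Complex.I) - 1)) atTop (𝓝 (-t ^ 2 / 2)) := by
    rw [tendsto_iff_norm_sub_tendsto_zero]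
    have hlim : Tendsto (fun n ↦ t ^ 2 / δ * (|c n| * Real.exp |c n|)) atTop (𝓝 0) := by
      have h : Continuous fun x : ℝ ↦ t ^ 2 / δ * (|x| * Real.exp |x|) := by fun_prop
      simpa [Function.comp_def] using (h.tendsto 0).comp hc0
    refine squeeze_zero' (Eventually.of_forall fun _ ↦ norm_nonneg _) ?_ hlim
    filter_upwards [eventually_ne_atTop 0] with n hn
    have hv := hvar n hn
    have hvC : (n : ℂ) * (p n * (1 - p n)) * c n ^ 2 = t ^ 2 := by exact_mod_cast hv
    have heq : (n : ℂ) * ((p n : ℂ) * exp ((1 - p n) * c n * Complex.I) +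
        (1 - p n) * exp (-p n * c n * Complex.I) - 1) - -t ^ 2 / 2 =
        n * (((p n : ℂ) * exp ((1 - p n) * c n * Complex.I) +
          (1 - p n) * exp (-p n * c n * Complex.I) - 1) + p n * (1 - p n) * c n ^ 2 / 2) := by
      rw [← hvC]
      ring
    rw [heq, norm_mul, Complex.norm_natCast]
    calc (n : ℝ) * _ ≤ n * (|c n| ^ 3 * Real.exp |c n|) := by
          gcongr
          exact norm_charFun_centered_bernoulli_sub_le (p n) (c n)
      _ = n * c n ^ 2 * (|c n| * Real.exp |c n|) := by
          rw [← sq_abs (c n)]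
          ring
      _ ≤ t ^ 2 / δ * (|c n| * Real.exp |c n|) := by
          gcongr
          rw [le_div_iff₀ hδ, ← hv]
          nlinarith [mul_le_mul_of_nonneg_left (hp n)
            (mul_nonneg (n.cast_nonneg (α := ℝ)) (sq_nonneg (c n)))]
  have := tendsto_one_add_pow_exp_of_tendsto key
  simp only [add_sub_cancel] at this
  convert! this using 2
  simp [neg_div]

lemma measureReal_gaussianReal_Iio_zero : (gaussianReal 0 1).real (Set.Iio 0) = 1 / 2 := by
  have := nullSingletonClass_gaussianReal (μ := 0) one_ne_zero
  have hsymm : (gaussianReal 0 1).real (Set.Ioi 0) = (gaussianReal 0 1).real (Set.Iio 0) := by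
    conv_lhs => rw [← neg_zero (G := ℝ), ← gaussianReal_map_neg]
    rw [map_measureReal_apply (by fun_prop) measurableSet_Ioi]
    congr 1
    ext x
    simp
  have hcompl := probReal_compl_eq_one_sub (μ := gaussianReal 0 1)
    (measurableSet_Iio (a := (0 : ℝ)))
  rw [Set.compl_Iio, ← measureReal_congr Ioi_ae_eq_Ici, hsymm] at hcompl
  linarith

lemma measureReal_gaussianReal_Icc_le {a b : ℝ} (hab : a ≤ b) :
    (gaussianReal 0 1).real (Set.Icc a b) ≤ (b - a) / 2 := by
  have hpdf (x : ℝ) : gaussianPDFReal 0 1 x ≤ 1 / 2 := by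
    have hsqrt : 2 ≤ √(2 * Real.pi) :=
      Real.le_sqrt_of_sq_le (by nlinarith [Real.pi_gt_three])
    have hexp : Real.exp (-x ^ 2 / 2) ≤ 1 :=
      Real.exp_le_one_iff.mpr (by nlinarith [sq_nonneg x])
    have hinv : (√(2 * Real.pi))⁻¹ ≤ 1 / 2 := by
      rw [one_div]
      exact inv_anti₀ two_pos hsqrt
    have := mul_le_mul hinv hexp (Real.exp_pos _).le (by norm_num)
    simpa [gaussianPDFReal] using this
  rw [measureReal_def, gaussianReal_apply_eq_integral 0 one_ne_zero, ENNReal.toReal_ofReal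
    (integral_nonneg fun x ↦ gaussianPDFReal_nonneg 0 1 x)]
  calc ∫ x in Set.Icc a b, gaussianPDFReal 0 1 x
      ≤ ∫ _ in Set.Icc a b, (1 / 2 : ℝ) :=
        setIntegral_mono (integrable_gaussianPDFReal 0 1).integrableOn (by simp) hpdf
    _ = (b - a) / 2 := by
        simp [hab]
        ring

lemma one_third_lt_measureReal_gaussianReal_Ioi :
    1 / 3 < (gaussianReal 0 1).real (Set.Ioi (11 / 50)) := by
  have hIcc := measureReal_gaussianReal_Icc_le (a := 0) (b := 11 / 50) (by norm_num)
  have hIio := measureReal_gaussianReal_Iio_zero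
  have hunion : (Set.Iio 0 ∪ Set.Icc 0 (11 / 50) : Set ℝ) = Set.Iic (11 / 50) :=
    Set.Iio_union_Icc_eq_Iic (by norm_num)
  have hle := measureReal_union_le (μ := gaussianReal 0 1) (Set.Iio 0) (Set.Icc 0 (11 / 50))
  have hcompl := probReal_compl_eq_one_sub (μ := gaussianReal 0 1)
    (measurableSet_Iic (a := (11 / 50 : ℝ)))
  rw [Set.compl_Iic] at hcompl
  rw [hunion] at hle
  linarith

lemma measureReal_binomial (n : ℕ) (p : I) (s : Set ℕ) :
    (binomial n p).real s = ∑ k ∈ Finset.range (n + 1),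
      if k ∈ s then (n.choose k : ℝ) * p ^ k * (1 - p) ^ (n - k) else 0 := by
  rw [← integral_indicator_one (MeasurableSet.of_discrete (s := s)), integral_binomial,
    ← Nat.range_succ_eq_Iic]
  refine Finset.sum_congr rfl fun k _ ↦ ?_
  by_cases hk : k ∈ s <;> simp [hk]

lemma eventually_one_third_lt_measureReal_binomial {p : ℕ → I}
    (hp : ∀ n, (p n : ℝ) ∈ Set.Icc (1 / 3 : ℝ) (2 / 3)) :
    ∀ᶠ n : ℕ in atTop,
      1 / 3 < (binomial n (p n)).real {k | (n : ℝ) * p n + √n / 10 ≤ k} ∧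
      1 / 3 < (binomial n (p n)).real {k | (k : ℝ) ≤ n * p n} := by
  have := nullSingletonClass_gaussianReal (μ := 0) one_ne_zero
  have hvar (n : ℕ) : (2 / 9 : ℝ) ≤ p n * (1 - p n) := by
    nlinarith [mul_nonneg (sub_nonneg.mpr (hp n).1) (sub_nonneg.mpr (hp n).2)]
  have hclt := tendsto_standardizedBinomial (by norm_num) hvar
  have hlim {s : Set ℝ} (hs : gaussianReal 0 1 (frontier s) = 0) :
      Tendsto (fun n ↦ (standardizedBinomial n (p n)).real s) atTop
        (𝓝 ((gaussianReal 0 1).real s)) :=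
    (ENNReal.tendsto_toReal (measure_ne_top _ _)).comp
      (ProbabilityMeasure.tendsto_measure_of_null_frontier_of_tendsto' hclt hs)
  have hupper := (hlim (s := Set.Ioi (11 / 50)) (by simp)).eventually_const_lt
    one_third_lt_measureReal_gaussianReal_Ioi
  have hlower := (hlim (s := Set.Iio 0) (by simp)).eventually_const_lt
    (u := 1 / 3) (by rw [measureReal_gaussianReal_Iio_zero]; norm_num)
  filter_upwards [hupper, hlower, eventually_gt_atTop 0] with n hu hl hn
  have hn' : (0 : ℝ) < n := by exact_mod_cast hn
  have hpos : 0 < √(n * (p n * (1 - p n))) :=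
    Real.sqrt_pos.mpr (mul_pos hn' (by linarith [hvar n]))
  rw [standardizedBinomial, map_measureReal_apply .of_discrete measurableSet_Ioi] at hu
  rw [standardizedBinomial, map_measureReal_apply .of_discrete measurableSet_Iio] at hl
  refine ⟨hu.trans_le (measureReal_mono fun k hk ↦ ?_),
    hl.trans_le (measureReal_mono fun k hk ↦ ?_)⟩
  · have hk' : 11 / 50 < ((k : ℝ) - n * p n) / √(n * (p n * (1 - p n))) := hk
    rw [lt_div_iff₀ hpos] at hk'
    have hσ : 5 / 11 ≤ √((p n : ℝ) * (1 - p n)) :=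
      Real.le_sqrt_of_sq_le (by linarith [hvar n])
    rw [Real.sqrt_mul hn'.le] at hk'
    have := mul_le_mul_of_nonneg_left hσ (Real.sqrt_nonneg (n : ℝ))
    change (n : ℝ) * p n + √n / 10 ≤ k
    linarith
  · have hk' : ((k : ℝ) - n * p n) / √(n * (p n * (1 - p n))) < 0 := hk
    rw [div_lt_iff₀ hpos, zero_mul] at hk'
    change (k : ℝ) ≤ n * p n
    linarith

/-- **binomial anti-concentration.** There exists an integer `N` such that for
all integers `n ≥ N` and all `p ∈ [1/3, 2/3]`, if `Z ~ B(n, p)`, then both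
`Pr[Z ≥ np + √n/10] ≥ 1/3` and `Pr[Z ≤ np] ≥ 1/3`. -/
theorem binomial_anticoncentration :
    ∃ N : ℕ, ∀ n : ℕ, N ≤ n → ∀ p : ℝ, p ∈ Set.Icc (1 / 3 : ℝ) (2 / 3) →
      ((1 / 3 : ℝ) ≤ ∑ x ∈ Finset.range (n + 1),
          if (n : ℝ) * p + Real.sqrt n / 10 ≤ (x : ℝ)
          then (n.choose x : ℝ) * p ^ x * (1 - p) ^ (n - x) else 0) ∧
      ((1 / 3 : ℝ) ≤ ∑ x ∈ Finset.range (n + 1),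
          if (x : ℝ) ≤ (n : ℝ) * p
          then (n.choose x : ℝ) * p ^ x * (1 - p) ^ (n - x) else 0) := by
  have hunif : ∃ N : ℕ, ∀ n, N ≤ n → ∀ p : I, (p : ℝ) ∈ Set.Icc (1 / 3 : ℝ) (2 / 3) →
      1 / 3 < (binomial n p).real {k | (n : ℝ) * p + √n / 10 ≤ k} ∧
      1 / 3 < (binomial n p).real {k | (k : ℝ) ≤ n * p} := by
    let good (n : ℕ) (p : I) : Prop :=
      1 / 3 < (binomial n p).real {k | (n : ℝ) * p + √n / 10 ≤ k} ∧
      1 / 3 < (binomial n p).real {k | (k : ℝ) ≤ n * p}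
    have hworst (n : ℕ) : ∃ p : I, (p : ℝ) ∈ Set.Icc (1 / 3 : ℝ) (2 / 3) ∧
        (good n p → ∀ q : I, (q : ℝ) ∈ Set.Icc (1 / 3 : ℝ) (2 / 3) → good n q) := by
      by_cases h : ∀ q : I, (q : ℝ) ∈ Set.Icc (1 / 3 : ℝ) (2 / 3) → good n q
      · exact ⟨⟨1 / 2, by norm_num, by norm_num⟩, ⟨by norm_num, by norm_num⟩, fun _ ↦ h⟩
      · push Not at h
        obtain ⟨q, hq, hbad⟩ := h
        exact ⟨q, hq, fun hgood ↦ absurd hgood hbad⟩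
    choose p hp hgood using hworst
    obtain ⟨N, hN⟩ := eventually_atTop.mp (eventually_one_third_lt_measureReal_binomial hp)
    exact ⟨N, fun n hn ↦ hgood n (hN n hn)⟩
  obtain ⟨N, hN⟩ := hunif
  refine ⟨N, fun n hn p hp ↦ ?_⟩
  have h := hN n hn ⟨p, by linarith [hp.1], by linarith [hp.2]⟩ hp
  simp only [measureReal_binomial, Set.mem_ofPred_eq] at h
  exact ⟨h.1.le, h.2.le⟩
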